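/- Let N ≥ 1, let λ₁, …, λ_N ∈ ℝ² be unit vectors, let G ∈ ℝ^{N×2N} be the block-diagonal matrix whose i-th diagonal block is the row vector λ̄ᵢᵀ. Let (k_{ij}) for i,j ∈ {1,…,N,*} be a symmetric positive semidefinite (N+1)×(N+1) real matrix with k_{**} > 0; let K ∈ ℝ^{2N×2N} have (i,j) block k_{ij}I₂, let K* ∈ ℝ^{2N×2} have i-th block k_{i*}I₂, and let σ > 0. Then (i) K*ᵀGᵀGK* = Σ_{j=1}^N k_{j*}² (2I₂ − 2λⱼλⱼᵀ); and (ii) the posterior covariance Σ = k_{**}I₂ − K*ᵀGᵀ(G(K + σ²I_{2N})Gᵀ)⁻¹GK* satisfies, in the Loewner order, Σ ⪯ k_{**}I₂ − (Σ_{j=1}^N k_{j*}²(2I₂ − 2λⱼλⱼᵀ))/(‖GKGᵀ‖ + 2σ²), where ‖·‖ is the spectral norm. -/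

import Mathlib

open Matrix

/-- The rotation-and-scaling matrix `R` with first row `(0, √2)` and second row `(−√2, 0)`. -/
noncomputable def Rmat : Matrix (Fin 2) (Fin 2) ℝ :=
  !![0, Real.sqrt 2; -Real.sqrt 2, 0]

/-- `λ̄ = R λ`. -/
noncomputable def bearingBar (l : Fin 2 → ℝ) : Fin 2 → ℝ := Rmat.mulVec l

/-- The block-diagonal bearing data matrix `G ∈ ℝ^{N×2N}` whose `i`-th diagonal block is the
row vector `λ̄ᵢᵀ`.  Columns are indexed by `Fin N × Fin 2`. -/
noncomputable def Gmat {N : ℕ} (lam : Fin N → Fin 2 → ℝ) :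
    Matrix (Fin N) (Fin N × Fin 2) ℝ :=
  fun i jl => if i = jl.1 then bearingBar (lam jl.1) jl.2 else 0

/-- The `2N × 2N` kernel Gram matrix whose `(i,j)` block is `k_{ij} I₂`. -/
def Kmat {N : ℕ} (k : Matrix (Option (Fin N)) (Option (Fin N)) ℝ) :
    Matrix (Fin N × Fin 2) (Fin N × Fin 2) ℝ :=
  fun il jm => k (some il.1) (some jm.1) * (1 : Matrix (Fin 2) (Fin 2) ℝ) il.2 jm.2

/-- The `2N × 2` kernel matrix `K*` whose `i`-th block is `k_{i*} I₂`. -/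
def KstarMat {N : ℕ} (k : Matrix (Option (Fin N)) (Option (Fin N)) ℝ) :
    Matrix (Fin N × Fin 2) (Fin 2) ℝ :=
  fun il m => k (some il.1) none * (1 : Matrix (Fin 2) (Fin 2) ℝ) il.2 m

/-- The spectral norm of a real square matrix, i.e. the operator norm of the induced
continuous linear endomorphism of Euclidean space. -/
noncomputable def specNorm {n : Type*} [Fintype n] [DecidableEq n]
    (A : Matrix n n ℝ) : ℝ :=
  ‖Matrix.toEuclideanCLM (𝕜 := ℝ) (n := n) A‖

/-!
Since `λ̄ ⬝ λ̄ = 2`, the bearing matrix satisfies `G Gᵀ = 2 I`, so adding `σ² I` to `K` turns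
`M = G K Gᵀ` into `M + 2σ² I ⪯ (‖M‖ + 2σ²) I`. Inversion reverses the Loewner order, and conjugating
by `G K*` gives the covariance bound in terms of `(G K*)ᵀ G K*`. This matrix is the sum of the outer
products of the rows `k_{j*} λ̄ⱼᵀ` of `G K*`, and rotating `λ` by a right angle turns `λ λᵀ` into
`|λ|² I − λ λᵀ`.
-/

section LoewnerOrder

open scoped MatrixOrder ComplexOrder

variable {m n p 𝕜 : Type*} [RCLike 𝕜] [Fintype n]

theorem conjTranspose_mul_mul_mono [Finite p] {A B : Matrix n n 𝕜} (hAB : A ≤ B)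
    (C : Matrix n p 𝕜) : Cᴴ * A * C ≤ Cᴴ * B * C := by
  rw [le_iff, ← Matrix.sub_mul, ← Matrix.mul_sub]
  exact PosSemidef.conjTranspose_mul_mul_same hAB C

variable [DecidableEq n]

-- `B - A` and `A⁻¹ - B⁻¹` are the two Schur complements of the block matrix `[[B, 1], [1, A⁻¹]]`.
theorem inv_le_inv_of_posDef {A B : Matrix n n 𝕜} (hA : A.PosDef) (hAB : A ≤ B) :
    B⁻¹ ≤ A⁻¹ := by
  have hB : B.PosDef := by simpa using hA.add_posSemidef hAB
  have := hA.isUnit.invertible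
  have := hB.isUnit.invertible
  have schur_right := PosDef.fromBlocks₂₂ B (1 : Matrix n n 𝕜) hA.inv
  have schur_left := PosDef.fromBlocks₁₁ (1 : Matrix n n 𝕜) A⁻¹ hB
  simp only [conjTranspose_one, Matrix.one_mul, Matrix.mul_one, inv_inv_of_invertible]
    at schur_right schur_left
  exact schur_left.1 (schur_right.2 hAB)

open scoped Matrix.Norms.L2Operator in
theorem le_specNorm_smul_one {A : Matrix n n ℝ} (hA : A.IsHermitian) : A ≤ specNorm A • 1 := by
  nontriviality Matrix n n ℝ
  rw [specNorm, ← cstar_norm_def, ← Algebra.algebraMap_eq_smul_one,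
    le_algebraMap_iff_spectrum_le (ha := hA.isSelfAdjoint)]
  exact fun r hr => (Real.le_norm_self r).trans (spectrum.norm_le_norm_of_mem hr)

theorem inv_specNorm_add_smul_one_le {M : Matrix n n ℝ} (hM : M.PosSemidef) {s : ℝ} (hs : 0 < s) :
    (specNorm M + s)⁻¹ • (1 : Matrix n n ℝ) ≤ (M + s • 1)⁻¹ := by
  have noisy_posDef : (M + s • 1).PosDef := PosDef.posSemidef_add hM (PosDef.one.smul hs)
  have noisy_le : M + s • 1 ≤ (specNorm M + s) • 1 := by
    rw [add_smul]
    gcongr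
    exact le_specNorm_smul_one hM.isHermitian
  have bound_ne_zero : specNorm M + s ≠ 0 := (add_pos_of_nonneg_of_pos (norm_nonneg _) hs).ne'
  have inv_bound : ((specNorm M + s) • (1 : Matrix n n ℝ))⁻¹ = (specNorm M + s)⁻¹ • 1 :=
    inv_eq_right_inv (by simp [smul_smul, bound_ne_zero])
  exact inv_bound ▸ inv_le_inv_of_posDef noisy_posDef noisy_le

theorem inv_specNorm_add_smul_le_conj_inv [Fintype m] [DecidableEq m] [Finite p]
    {K : Matrix m m ℝ} (hK : K.PosSemidef) {G : Matrix n m ℝ} {c s : ℝ} (hG : G * Gᵀ = c • 1)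
    (hcs : 0 < c * s) (L : Matrix m p ℝ) :
    (specNorm (G * K * Gᵀ) + c * s)⁻¹ • (Lᵀ * Gᵀ * G * L) ≤
      Lᵀ * Gᵀ * (G * (K + s • 1) * Gᵀ)⁻¹ * G * L := by
  have noisy_gram : G * (K + s • 1) * Gᵀ = G * K * Gᵀ + (c * s) • 1 := by
    rw [Matrix.mul_add, Matrix.add_mul, Matrix.mul_smul, Matrix.mul_one, Matrix.smul_mul, hG,
      smul_smul, mul_comm s c]
  have gram_posSemidef : (G * K * Gᵀ).PosSemidef := hK.mul_mul_conjTranspose_same G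
  have conj_le :=
    conjTranspose_mul_mul_mono (inv_specNorm_add_smul_one_le gram_posSemidef hcs) (G * L)
  simpa only [noisy_gram, conjTranspose_eq_transpose_of_trivial, transpose_mul, Matrix.mul_smul,
    Matrix.smul_mul, Matrix.mul_one, Matrix.mul_assoc] using conj_le

end LoewnerOrder

theorem transpose_mul_self_eq_sum_vecMulVec {m n R : Type*} [Fintype m]
    [NonUnitalNonAssocSemiring R] (A : Matrix m n R) : Aᵀ * A = ∑ i, vecMulVec (A i) (A i) := by
  ext a b
  simp [mul_apply, Matrix.sum_apply, vecMulVec_apply]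

section BearingMatrix

theorem bearingBar_eq_sqrt_two_smul (l : Fin 2 → ℝ) : bearingBar l = √2 • ![l 1, -l 0] := by
  ext i
  fin_cases i <;> simp [bearingBar, Rmat, mulVec, dotProduct]

theorem bearingBar_dotProduct_self (l : Fin 2 → ℝ) :
    bearingBar l ⬝ᵥ bearingBar l = 2 * (l ⬝ᵥ l) := by
  have rotated : ![l 1, -l 0] ⬝ᵥ ![l 1, -l 0] = l ⬝ᵥ l := by
    simp [dotProduct, Fin.sum_univ_two, add_comm]
  rw [bearingBar_eq_sqrt_two_smul, smul_dotProduct, dotProduct_smul, rotated, smul_smul,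
    Real.mul_self_sqrt zero_le_two, smul_eq_mul]

theorem vecMulVec_bearingBar_self (l : Fin 2 → ℝ) :
    vecMulVec (bearingBar l) (bearingBar l) =
      (2 : ℝ) • ((l ⬝ᵥ l) • (1 : Matrix (Fin 2) (Fin 2) ℝ)) - (2 : ℝ) • vecMulVec l l := by
  have rotated : vecMulVec ![l 1, -l 0] ![l 1, -l 0] = (l ⬝ᵥ l) • 1 - vecMulVec l l := by
    ext a b
    fin_cases a <;> fin_cases b <;> simp [vecMulVec_apply, dotProduct, Fin.sum_univ_two, mul_comm]
  rw [bearingBar_eq_sqrt_two_smul, smul_vecMulVec, vecMulVec_smul, rotated, smul_smul,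
    Real.mul_self_sqrt zero_le_two, smul_sub]

variable {N : ℕ} (lam : Fin N → Fin 2 → ℝ) (k : Matrix (Option (Fin N)) (Option (Fin N)) ℝ)

theorem Gmat_mul_apply {p : Type*} (A : Matrix (Fin N × Fin 2) p ℝ) (i : Fin N) (a : p) :
    (Gmat lam * A) i a = bearingBar (lam i) ⬝ᵥ fun b => A (i, b) a := by
  simp [mul_apply, Fintype.sum_prod_type_right, Gmat, dotProduct]

theorem Gmat_mul_transpose_self :
    Gmat lam * (Gmat lam)ᵀ = diagonal fun i => 2 * (lam i ⬝ᵥ lam i) := by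
  ext i j
  rw [Gmat_mul_apply]
  obtain rfl | hij := eq_or_ne i j
  · simpa [Gmat] using bearingBar_dotProduct_self (lam i)
  · simp [Gmat, dotProduct, hij, hij.symm]

theorem Gmat_mul_KstarMat_apply (i : Fin N) :
    (Gmat lam * KstarMat k) i = k (some i) none • bearingBar (lam i) := by
  ext a
  simp [Gmat_mul_apply, KstarMat, dotProduct, one_apply, mul_comm]

theorem Gmat_mul_KstarMat_gram_eq_sum :
    (KstarMat k)ᵀ * (Gmat lam)ᵀ * Gmat lam * KstarMat k =
      ∑ j, k (some j) none ^ 2 •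
        ((2 : ℝ) • ((lam j ⬝ᵥ lam j) • (1 : Matrix (Fin 2) (Fin 2) ℝ))
          - (2 : ℝ) • vecMulVec (lam j) (lam j)) := by
  rw [Matrix.mul_assoc, ← transpose_mul, transpose_mul_self_eq_sum_vecMulVec]
  refine Finset.sum_congr rfl fun j _ => ?_
  rw [Gmat_mul_KstarMat_apply, smul_vecMulVec, vecMulVec_smul, smul_smul, vecMulVec_bearingBar_self,
    sq]

variable {k} in
theorem posSemidef_Kmat (hk : (k.submatrix some some).PosSemidef) : (Kmat k).PosSemidef :=
  hk.kronecker PosSemidef.one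

end BearingMatrix

theorem posterior_covariance_loewner_bound {N : ℕ} (hN : 1 ≤ N)
    (lam : Fin N → Fin 2 → ℝ) (hlam : ∀ i, lam i 0 ^ 2 + lam i 1 ^ 2 = 1)
    (k : Matrix (Option (Fin N)) (Option (Fin N)) ℝ)
    (hk : k.PosSemidef) (hkstar : 0 < k none none) (σ : ℝ) (hσ : 0 < σ) :
    (KstarMat k)ᵀ * (Gmat lam)ᵀ * (Gmat lam) * KstarMat k =
      ∑ j : Fin N, k (some j) none ^ 2 •
        ((2 : ℝ) • (1 : Matrix (Fin 2) (Fin 2) ℝ) - (2 : ℝ) • vecMulVec (lam j) (lam j)) ∧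
    ((k none none • (1 : Matrix (Fin 2) (Fin 2) ℝ)
        - (specNorm (Gmat lam * Kmat k * (Gmat lam)ᵀ) + 2 * σ ^ 2)⁻¹ •
          ∑ j : Fin N, k (some j) none ^ 2 •
            ((2 : ℝ) • (1 : Matrix (Fin 2) (Fin 2) ℝ)
              - (2 : ℝ) • vecMulVec (lam j) (lam j)))
      - (k none none • (1 : Matrix (Fin 2) (Fin 2) ℝ)
        - (KstarMat k)ᵀ * (Gmat lam)ᵀ
          * (Gmat lam * (Kmat k + σ ^ 2 • (1 : Matrix (Fin N × Fin 2) (Fin N × Fin 2) ℝ))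
              * (Gmat lam)ᵀ)⁻¹
          * Gmat lam * KstarMat k)).PosSemidef := by
  have lam_unit (i : Fin N) : lam i ⬝ᵥ lam i = 1 := by
    simpa [dotProduct, Fin.sum_univ_two, sq] using hlam i
  have gram_eq := Gmat_mul_KstarMat_gram_eq_sum lam k
  simp only [lam_unit, one_smul] at gram_eq
  refine ⟨gram_eq, ?_⟩
  have G_mul_transpose : Gmat lam * (Gmat lam)ᵀ = (2 : ℝ) • 1 := by
    simp [Gmat_mul_transpose_self, lam_unit, smul_one_eq_diagonal]
  rw [← gram_eq, sub_sub_sub_cancel_left]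
  exact inv_specNorm_add_smul_le_conj_inv (posSemidef_Kmat (hk.submatrix some)) G_mul_transpose
    (by positivity) (KstarMat k)
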